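/- For all real numbers x, y with 0 ≤ x ≤ 1 and 0 ≤ y ≤ (1 − x²)/2, one has (1/3)·(1 − x² − 4y²/(1 + x)) + 4y + x² + 3x ≤ 4. -/

import Mathlib

/-! The left side is concave in `y`, so it lies below its tangent line at the endpoint
`y = (1 - x ^ 2) / 2`. That line has slope `4 - 4 * (1 - x) / 3 > 0`, so its maximum is at the
endpoint, where the gap to `4` equals `(1 - x) * (6 - 4 * x - x ^ 2) / 3 ≥ 0`. -/

theorem f1_bound (x y : ℝ) (hx0 : 0 ≤ x) (hx1 : x ≤ 1)
    (hy0 : 0 ≤ y) (hy1 : y ≤ (1 - x ^ 2) / 2) :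
    (1 / 3) * (1 - x ^ 2 - 4 * y ^ 2 / (1 + x)) + 4 * y + x ^ 2 + 3 * x ≤ 4 := by
  have h_pos : 0 < 1 + x := by linarith
  have h_tangent : 4 * y * (1 - x) - (1 - x) ^ 2 * (1 + x) ≤ 4 * y ^ 2 / (1 + x) := by
    rw [le_div_iff₀ h_pos]
    nlinarith [sq_nonneg (2 * y - (1 - x) * (1 + x))]
  have h_slope : 0 ≤ (4 - 4 * (1 - x) / 3) * ((1 - x ^ 2) / 2 - y) :=
    mul_nonneg (by linarith) (by linarith)
  have h_end : 0 ≤ (1 - x) * (6 - 4 * x - x ^ 2) :=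
    mul_nonneg (by linarith) (by nlinarith)
  linarith
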